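/- arXiv:1711.00850 — 3 statements merged into one kernel-verified Lean document; each statement's English description precedes it below -/
import Mathlib

section
/- Let k be a positive integer and let λ be a real number with λ ≠ 1. Then for every real t with |λ²t/(λ-1)| < 1, the series Σ_{n=0}^∞ Y(n,k,λ) tⁿ/n! converges and equals (2/(λ(1+λt)-1))^k; in other words, the numbers Y(n,k,λ) = (-1)ⁿ · C(k+n-1, n) · 2^k · n! · λ^{2n} / (λ-1)^{k+n} are exactly the coefficients in the Maclaurin expansion of the generating function F(t,k;λ) = (2/(λ(1+λt)-1))^k. -/
/-- The higher-order numbers `Y_n^{(k)}(λ)` of Kucukoglu–Simsek, given by their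
explicit formula `Y(n,k,λ) = (-1)^n C(k+n-1,n) 2^k n! λ^(2n) / (λ-1)^(k+n)`. -/
noncomputable def Y (n k : ℕ) (l : ℝ) : ℝ :=
  (-1 : ℝ) ^ n * (Nat.choose (k + n - 1) n : ℝ) * 2 ^ k * (Nat.factorial n : ℝ) *
    l ^ (2 * n) / (l - 1) ^ (k + n)

open scoped Ring in
theorem hasSum_multichoose_mul_geometric_of_norm_lt_one {R : Type*} [NormedRing R]
    [HasSummableGeomSeries R] (k : ℕ) {r : R} (hr : ‖r‖ < 1) :
    HasSum (fun n ↦ (k.multichoose n : R) * r ^ n) ((1 - r)⁻¹ʳ ^ k) := by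
  cases k with
  | zero =>
    have vanish_off_zero (n : ℕ) (hn : n ≠ 0) : (Nat.multichoose 0 n : R) * r ^ n = 0 := by
      obtain ⟨m, rfl⟩ := Nat.exists_eq_succ_of_ne_zero hn
      simp
    simpa using hasSum_single 0 vanish_off_zero
  | succ m =>
    have multichoose_eq_choose (n : ℕ) : (m + 1).multichoose n = (n + m).choose m := by
      rw [Nat.multichoose_eq, Nat.add_right_comm, Nat.add_sub_cancel, Nat.add_comm m,
        Nat.choose_symm_add]
    simpa only [multichoose_eq_choose] using hasSum_choose_mul_geometric_of_norm_lt_one' m hr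

theorem hasSum_div_add_mul_pow {𝕜 : Type*} [NormedField 𝕜] (k : ℕ) {a b x : 𝕜} (c : 𝕜)
    (ha : a ≠ 0) (hx : ‖b * x / a‖ < 1) :
    HasSum (fun n ↦ (-1) ^ n * (k.multichoose n : 𝕜) * c ^ k * b ^ n / a ^ (k + n) * x ^ n)
      ((c / (a + b * x)) ^ k) := by
  have hr : ‖-(b * x / a)‖ < 1 := by rwa [norm_neg]
  have factor_out : c / (a + b * x) = c / a * (1 - -(b * x / a))⁻¹ := by
    rw [← div_eq_mul_inv, div_div, sub_neg_eq_add, mul_add, mul_one, mul_div_cancel₀ _ ha]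
  have term_eq (n : ℕ) :
      (-1) ^ n * (k.multichoose n : 𝕜) * c ^ k * b ^ n / a ^ (k + n) * x ^ n =
        (c / a) ^ k * ((k.multichoose n : 𝕜) * (-(b * x / a)) ^ n) := by
    rw [neg_pow (b * x / a), div_pow, div_pow, mul_pow, pow_add]
    field_simp
  simp only [term_eq, factor_out, mul_pow, ← Ring.inverse_eq_inv]
  exact (hasSum_multichoose_mul_geometric_of_norm_lt_one k hr).mul_left _

theorem Y_div_factorial (n k : ℕ) (l : ℝ) :
    Y n k l / n.factorial =
      (-1) ^ n * (k.multichoose n : ℝ) * 2 ^ k * (l ^ 2) ^ n / (l - 1) ^ (k + n) := by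
  have factorial_ne_zero : (n.factorial : ℝ) ≠ 0 := mod_cast n.factorial_ne_zero
  rw [Y, Nat.multichoose_eq, ← pow_mul, div_right_comm, mul_right_comm _ (n.factorial : ℝ),
    mul_div_cancel_right₀ _ factorial_ne_zero]

/-- The numbers `Y(n,k,λ)` are exactly the Maclaurin coefficients of the generating
function `F(t,k;λ) = (2/(λ(1+λt)-1))^k`. -/
theorem stmt_0 (k : ℕ) (hk : 0 < k) (l : ℝ) (hl : l ≠ 1) (t : ℝ)
    (ht : |l ^ 2 * t / (l - 1)| < 1) :
    HasSum (fun n : ℕ => Y n k l * t ^ n / (Nat.factorial n : ℝ))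
      ((2 / (l * (1 + l * t) - 1)) ^ k) := by
  have denominator_eq : l * (1 + l * t) - 1 = (l - 1) + l ^ 2 * t := by ring
  have term_eq (n : ℕ) : Y n k l * t ^ n / n.factorial = Y n k l / n.factorial * t ^ n :=
    mul_div_right_comm _ _ _
  simp only [denominator_eq, term_eq, Y_div_factorial]
  exact hasSum_div_add_mul_pow k 2 (sub_ne_zero.mpr hl) ht
end

section
/- Let n and v be nonnegative integers, k a positive integer, and λ a real number with λ ≠ 1. Then Y(n+v, k, λ) = ((-1)^v · k^{(v)} · λ^{2v} / 2^v) · Y(n, k+v, λ), where k^{(v)} = k(k+1)(k+2)⋯(k+v-1) is the rising factorial. -/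
theorem Y_eq_ascFactorial (n k : ℕ) (l : ℝ) :
    Y n k l = (-1) ^ n * (k.ascFactorial n : ℝ) * 2 ^ k * l ^ (2 * n) / (l - 1) ^ (k + n) := by
  rw [Y, Nat.ascFactorial_eq_factorial_mul_choose', Nat.cast_mul]
  ring

/-- `Y(n+v,k,λ) = ((-1)^v k^{(v)} λ^{2v} / 2^v) · Y(n,k+v,λ)`, where
`k^{(v)} = k(k+1)⋯(k+v-1)` is the rising factorial. -/
theorem stmt_9 (n v k : ℕ) (hk : 0 < k) (l : ℝ) (hl : l ≠ 1) :
    Y (n + v) k l =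
      (-1 : ℝ) ^ v * (Nat.ascFactorial k v : ℝ) * l ^ (2 * v) / 2 ^ v * Y n (k + v) l := by
  have ascFactorial_split :
      (k.ascFactorial (n + v) : ℝ) = k.ascFactorial v * (k + v).ascFactorial n := by
    rw [add_comm n v, ← Nat.ascFactorial_mul_ascFactorial, Nat.cast_mul]
  have denominator_exponent : k + (n + v) = k + v + n := by ring
  rw [Y_eq_ascFactorial, Y_eq_ascFactorial, ascFactorial_split, denominator_exponent]
  field_simp
  ring
end

section
/- Let n be a positive integer, k a positive integer, and λ₀ a real number with λ₀ ≠ 1. Then the function λ ↦ Y(n,k,λ) is differentiable at λ₀ and its derivative there equals -(k/2) · ( 2λ₀ · n · Y(n-1, k+1, λ₀) + Y(n, k+1, λ₀) ). -/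
/-! Since `Y n k` is `n!` times the coefficient of `tⁿ` in `(2 / (λ (1 + λ t) - 1)) ^ k`,
differentiating in `t` gives the recurrence `Y (n + 1) k = -(k / 2) λ² Y n (k + 1)`. The derivative
formula in `λ` propagates along it by the product rule, starting from `Y 0 k = (2 / (λ - 1)) ^ k`.
-/

lemma Y_zero_left (k : ℕ) (l : ℝ) : Y 0 k l = (2 / (l - 1)) ^ k := by
  simp [Y, div_pow]

lemma Y_succ_left (n k : ℕ) (l : ℝ) :
    Y (n + 1) k l = -((k : ℝ) / 2) * l ^ 2 * Y n (k + 1) l := by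
  have choose_rec : ((k + n).choose (n + 1) : ℝ) * (n + 1) = (k + n).choose n * k := by
    have h := Nat.choose_succ_right_eq (k + n) n
    rw [Nat.add_sub_cancel] at h
    exact_mod_cast h
  have left_index : k + (n + 1) - 1 = k + n := rfl
  have right_index : k + 1 + n - 1 = k + n := by lia
  have exponent : k + 1 + n = k + (n + 1) := by lia
  rw [Y, Y, left_index, right_index, exponent, Nat.factorial_succ]
  push_cast
  linear_combination
    (-1) ^ (n + 1) * 2 ^ k * (n.factorial : ℝ) * l ^ (2 * (n + 1)) / (l - 1) ^ (k + (n + 1)) *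
      choose_rec

lemma hasDerivAt_Y_zero_left (k : ℕ) {l : ℝ} (hl : l ≠ 1) :
    HasDerivAt (Y 0 k) (-((k : ℝ) / 2) * Y 0 (k + 1) l) l := by
  have hl' : l - 1 ≠ 0 := sub_ne_zero.mpr hl
  have base_deriv : HasDerivAt (fun x : ℝ => 2 / (x - 1)) (-(1 / 2) * (2 / (l - 1)) ^ 2) l := by
    have sub_deriv := (hasDerivAt_id' l).sub_const 1
    refine ((hasDerivAt_const l 2).fun_div sub_deriv hl').congr_deriv ?_
    field_simp
    ring
  rw [funext (Y_zero_left k), Y_zero_left]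
  refine (base_deriv.fun_pow k).congr_deriv ?_
  cases k with
  | zero => simp
  | succ k =>
    rw [Nat.add_sub_cancel]
    ring

lemma hasDerivAt_Y_succ_left {n k : ℕ} {l d : ℝ} (hd : HasDerivAt (Y n (k + 1)) d l) :
    HasDerivAt (Y (n + 1) k) (-((k : ℝ) / 2) * (2 * l * Y n (k + 1) l + l ^ 2 * d)) l := by
  rw [funext (Y_succ_left n k)]
  refine (((hasDerivAt_pow 2 l).const_mul (-((k : ℝ) / 2))).fun_mul hd).congr_deriv ?_
  push_cast
  ring

/-- Derivative formula for `λ ↦ Y(n,k,λ)`. -/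
theorem stmt_10 (n k : ℕ) (hn : 0 < n) (hk : 0 < k) (l₀ : ℝ) (hl : l₀ ≠ 1) :
    HasDerivAt (fun l : ℝ => Y n k l)
      (-((k : ℝ) / 2) * (2 * l₀ * (n : ℝ) * Y (n - 1) (k + 1) l₀ + Y n (k + 1) l₀)) l₀ := by
  induction n, hn using Nat.le_induction generalizing k with
  | base =>
    refine (hasDerivAt_Y_succ_left (hasDerivAt_Y_zero_left (k + 1) hl)).congr_deriv ?_
    rw [Y_succ_left 0 (k + 1)]
    push_cast
    ring
  | succ n hn ih =>
    obtain ⟨m, rfl⟩ := Nat.exists_eq_add_of_le' hn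
    refine (hasDerivAt_Y_succ_left (ih (k + 1) k.succ_pos)).congr_deriv ?_
    simp only [Nat.add_sub_cancel]
    rw [Y_succ_left (m + 1) (k + 1), Y_succ_left m (k + 1)]
    push_cast
    ring
end
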